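/- Fix integers m ≥ 2 and α ≥ 2 and set n := m + α − 1. Then asc(L(A_{m,α})) = m: the minimum number of accepting states among all complete DFAs accepting the language of the witness permutation automaton A_{m,α} is exactly m. -/

import Mathlib

/-!
The star of `T₀` has `n - (α - 1) = m` members, so the witness automaton itself shows `asc ≤ m`.

For the lower bound, the `n`-cycle and the adjacent transposition generate the symmetric group, and
since that group is finite, every permutation of `[n]` is already induced by a word
(`exists_word`). Hence every `α`-subset is reachable from the initial state. Two distinct
`α`-subsets `X ≠ Y` are distinguishable: as `α - 1 ≥ 1`, some `(α - 1)`-subset `T` of `X` contains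
a point outside `Y`, and a word carrying `T` onto `T₀` sends `X`, but not `Y`, into the star
(`exists_distinguishing_word`). So in any DFA for the same language the states reached by words
leading to the `m` members of the star are accepting and pairwise distinct.
-/

/-- Accepting-state complexity: the minimum number of accepting (final) states among
all complete DFAs (with finite state set) accepting the language `L`. -/
noncomputable def asc {α : Type} (L : Language α) : ℕ :=
  sInf {k | ∃ (σ : Type) (_ : Finite σ) (M : DFA α σ),
    M.accepts = L ∧ Nat.card M.accept = k}

/-- The transposition `(1 2)` on `[n]`, encoded on `Fin n` as the swap of `0` and `1`
(we label `[n] = {1, …, n}` by `Fin n = {0, …, n-1}`). -/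
noncomputable def swap01 (n : ℕ) : Equiv.Perm (Fin n) :=
  if h : 2 ≤ n then Equiv.swap ⟨0, by omega⟩ ⟨1, by omega⟩ else 1

/-- The binary alphabet is `Bool`: the letter `a := false` acts as the `n`-cycle
`(1 2 … n)` and the letter `b := true` acts as the transposition `(1 2)`. -/
noncomputable def letterPerm (n : ℕ) : Bool → Equiv.Perm (Fin n)
  | false => finRotate n
  | true => swap01 n

/-- The subset `{1, …, k}` of `[n]`, encoded as `{i : Fin n | i.val < k}`. -/
def seg (n k : ℕ) : Finset (Fin n) := Finset.univ.filter (fun i => (i : ℕ) < k)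

/-- The star `𝒮(T)`: the family of all `a`-element subsets `X` of `[n]` with `T ⊆ X`. -/
def starFam (n a : ℕ) (T : Finset (Fin n)) : Set (Finset (Fin n)) :=
  {X | X.card = a ∧ T ⊆ X}

/-- The witness permutation automaton `A_{m,α}` (with `n = m + α - 1`): states are the
subsets of `[n]` (the relevant part being the `α`-element ones), each letter acts
elementwise via `letterPerm`, the initial state is `q_I = {1, …, α}` and the final
states are the star `𝒮(T₀)` with `T₀ = {1, …, α-1}`. -/
noncomputable def witnessDFA (n a : ℕ) : DFA Bool (Finset (Fin n)) where
  step X c := X.map (letterPerm n c).toEmbedding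
  start := seg n a
  accept := starFam n a (seg n (a - 1))

/-- Every permutation of `[n]` is the action of some word on the states. -/
theorem exists_word (n a : ℕ) (hn : 2 ≤ n) (g : Equiv.Perm (Fin n)) :
    ∃ w : List Bool, ∀ X, (witnessDFA n a).evalFrom X w = X.map g.toEmbedding := by
  have hgen : Subgroup.closure ({finRotate n, swap01 n} : Set (Equiv.Perm (Fin n))) = ⊤ := by
    have h := Equiv.Perm.closure_cycle_adjacent_swap (isCycle_finRotate_of_le hn)
      (support_finRotate_of_le hn) ⟨0, by omega⟩
    have h1 : finRotate n ⟨0, by omega⟩ = ⟨1, by omega⟩ := by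
      obtain ⟨k, rfl⟩ := Nat.exists_eq_add_of_le' hn
      exact finRotate_of_lt (by omega)
    rw [h1] at h
    rw [← h, swap01, dif_pos hn]
  have hg : g ∈ Submonoid.closure ({finRotate n, swap01 n} : Set (Equiv.Perm (Fin n))) := by
    rw [← Subgroup.closure_toSubmonoid_of_finite, hgen]
    trivial
  induction hg using Submonoid.closure_induction with
  | mem x hx =>
    rcases hx with rfl | rfl
    · exact ⟨[false], fun X => rfl⟩
    · exact ⟨[true], fun X => rfl⟩
  | one => exact ⟨[], fun X => (Finset.map_refl (s := X)).symm⟩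
  | mul x y _ _ hx hy =>
    obtain ⟨u, hu⟩ := hx
    obtain ⟨v, hv⟩ := hy
    -- Words act on the right, so the factor applied first is read first.
    refine ⟨v ++ u, fun X => ?_⟩
    rw [DFA.evalFrom_of_append, hv, hu, Finset.map_map]
    rfl

theorem exists_word_map_eq (n a : ℕ) (hn : 2 ≤ n) (S T : Finset (Fin n)) (h : S.card = T.card) :
    ∃ g : Equiv.Perm (Fin n), S.map g.toEmbedding = T ∧
      ∃ w : List Bool, ∀ X, (witnessDFA n a).evalFrom X w = X.map g.toEmbedding := by
  obtain ⟨g, hg⟩ := Equiv.Perm.exists_map_finset_eq S T h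
  exact ⟨g, hg, exists_word n a hn g⟩

theorem card_seg (n k : ℕ) (h : k ≤ n) : (seg n k).card = k := by
  rw [seg, Fin.card_filter_val_lt, min_eq_right h]

theorem exists_distinguishing_word (n a : ℕ) (hn : 2 ≤ n) (ha : 2 ≤ a) (han : a ≤ n)
    (X Y : Finset (Fin n)) (hX : X.card = a) (hY : Y.card = a) (hne : X ≠ Y) :
    ∃ w : List Bool, (witnessDFA n a).evalFrom X w ∈ (witnessDFA n a).accept ∧
      (witnessDFA n a).evalFrom Y w ∉ (witnessDFA n a).accept := by
  have hsub : ¬ X ⊆ Y := fun h => hne (Finset.eq_of_subset_of_card_le h (by omega))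
  obtain ⟨x, hxX, hxY⟩ := Finset.not_subset.1 hsub
  obtain ⟨T, hxT, hTX, hT⟩ := Finset.exists_subsuperset_card_eq
    (Finset.singleton_subset_iff.2 hxX) (n := a - 1) (by simp; omega) (by omega)
  obtain ⟨g, hg, w, hw⟩ := exists_word_map_eq n a hn T (seg n (a - 1))
    (by rw [hT, card_seg _ _ (by omega)])
  refine ⟨w, ?_, ?_⟩
  · rw [hw]
    refine ⟨by simpa using hX, ?_⟩
    rw [← hg]
    exact Finset.map_subset_map.2 hTX
  · rw [hw]
    rintro ⟨-, h⟩
    rw [← hg] at h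
    exact hxY (Finset.map_subset_map.1 h (Finset.singleton_subset_iff.1 hxT))

/-- The members of the star are the sets `T ∪ {j}` with `j ∉ T`. -/
theorem card_starFam (n a : ℕ) (ha : 1 ≤ a) (T : Finset (Fin n)) (hT : T.card = a - 1) :
    Nat.card (starFam n a T) = n - (a - 1) := by
  have h : starFam n a T = ((Tᶜ.image fun j => insert j T : Finset (Finset (Fin n))) :
      Set (Finset (Fin n))) := by
    ext X
    simp only [starFam, Set.mem_ofPred_eq, Finset.coe_image, Set.mem_image, Finset.mem_coe,
      Finset.mem_compl]
    constructor
    · rintro ⟨hX, hTX⟩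
      have hc : (X \ T).card = 1 := by rw [Finset.card_sdiff_of_subset hTX]; omega
      obtain ⟨j, hj⟩ := Finset.card_eq_one.1 hc
      have hj' : j ∈ X \ T := by simp [hj]
      refine ⟨j, (Finset.mem_sdiff.1 hj').2, ?_⟩
      rw [Finset.insert_eq, ← hj, Finset.sdiff_union_of_subset hTX]
    · rintro ⟨j, hj, rfl⟩
      exact ⟨by rw [Finset.card_insert_of_notMem hj]; omega, Finset.subset_insert _ _⟩
  rw [h, Nat.card_coe_set_eq, Set.ncard_coe_finset, Finset.card_image_of_injOn, Finset.card_compl,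
    Fintype.card_fin, hT]
  intro i hi j hj hij
  have hi' : i ∈ insert j T := by
    have : i ∈ insert i T := Finset.mem_insert_self _ _
    simpa only [hij] using this
  rcases Finset.mem_insert.1 hi' with h | h
  · exact h
  · simp [h] at hi

/-- For `m ≥ 2`, `α ≥ 2` and `n = m + α - 1`, the language of the
witness permutation automaton `A_{m,α}` has accepting-state complexity exactly `m`. -/
theorem stmt8 (m a n : ℕ) (hm : 2 ≤ m) (ha : 2 ≤ a) (hn : n = m + a - 1) :
    asc (witnessDFA n a).accepts = m := by
  have hcard : Nat.card (witnessDFA n a).accept = m := by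
    have h := card_starFam n a (by omega) (seg n (a - 1)) (card_seg _ _ (by omega))
    change Nat.card (starFam n a (seg n (a - 1))) = m
    omega
  have hmem : m ∈ {k | ∃ (σ : Type) (_ : Finite σ) (M : DFA Bool σ),
      M.accepts = (witnessDFA n a).accepts ∧ Nat.card M.accept = k} :=
    ⟨_, inferInstance, witnessDFA n a, rfl, hcard⟩
  refine le_antisymm (Nat.sInf_le hmem) (le_csInf ⟨m, hmem⟩ ?_)
  rintro k ⟨σ, _, M, hM, rfl⟩
  have hiff : ∀ w, M.eval w ∈ M.accept ↔ (witnessDFA n a).eval w ∈ (witnessDFA n a).accept := by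
    intro w
    rw [← DFA.mem_accepts, ← DFA.mem_accepts, hM]
  have hreach : ∀ X : (witnessDFA n a).accept, ∃ w, (witnessDFA n a).eval w = X := by
    rintro ⟨X, hX, -⟩
    obtain ⟨g, hg, w, hw⟩ := exists_word_map_eq n a (by omega) (seg n a) X
      (by rw [hX, card_seg _ _ (by omega)])
    exact ⟨w, (hw _).trans hg⟩
  choose word hword using hreach
  rw [← hcard]
  refine Nat.card_le_card_of_injective
    (fun X => (⟨M.eval (word X), (hiff _).2 (by rw [hword]; exact X.2)⟩ : M.accept)) ?_
  intro X Y hXY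
  by_contra hne
  obtain ⟨w, hwX, hwY⟩ := exists_distinguishing_word n a (by omega) ha (by omega) X Y X.2.1 Y.2.1
    (fun h => hne (Subtype.ext h))
  have hXY' : M.eval (word X) = M.eval (word Y) := congrArg Subtype.val hXY
  -- Equal states of `M` have equal futures, so `w` cannot separate `X` from `Y`.
  have happ : M.eval (word X ++ w) = M.eval (word Y ++ w) := by
    simp only [DFA.eval, DFA.evalFrom_of_append] at hXY' ⊢
    rw [hXY']
  have hev : ∀ Z, (witnessDFA n a).eval (word Z ++ w) = (witnessDFA n a).evalFrom Z w := by
    intro Z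
    rw [← hword Z]
    exact DFA.evalFrom_of_append _ _ _ _
  apply hwY
  rw [← hev, ← hiff, ← happ, hiff, hev]
  exact hwX
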